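/- Let m, n be positive integers and let A3 (n×n) and A4 (m×m) be Hermitian positive definite complex matrices. Then ∫ DS exp(−tr(A3 Sᴴ A4 S)) = 1 / det(A3 ⊗ A4), where the integral ranges over all m×n complex matrices S and ⊗ denotes the Kronecker product of matrices. -/

import Mathlib

open MeasureTheory Matrix Complex
open scoped Kronecker ComplexOrder

/-!
Column-stacking `S ↦ vec S` preserves Lebesgue measure and turns `tr(A Sᴴ B S)` into the Hermitian
form of `Aᵀ ⊗ B` at `vec S`, so the matrix integral is a Gaussian integral over `ℂ ^ (n × m)`.
For a positive definite `H = Rᴴ R`, substituting `w = R z` reduces `∫ exp(-zᴴ H z)` to a product of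
one-dimensional Gaussians; as a real-linear map `R` has determinant `|det R|² = det H`.
-/

theorem integral_comp_linearMap_eq_smul_integral {E F : Type*}
    [NormedAddCommGroup E] [NormedSpace ℝ E] [FiniteDimensional ℝ E]
    [MeasurableSpace E] [BorelSpace E] [NormedAddCommGroup F] [NormedSpace ℝ F]
    (μ : Measure E) [μ.IsAddHaarMeasure] {f : E →ₗ[ℝ] E} (hf : LinearMap.det f ≠ 0) (g : E → F) :
    ∫ x, g (f x) ∂μ = |LinearMap.det f|⁻¹ • ∫ x, g x ∂μ := by
  have hbij : Function.Bijective f := (LinearMap.equivOfDetNeZero f hf).bijective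
  have hchange : ∫ x, g x ∂μ = |LinearMap.det f| • ∫ x, g (f x) ∂μ := by
    have h := integral_image_eq_integral_abs_det_fderiv_smul μ MeasurableSet.univ
      (fun x _ => (LinearMap.toContinuousLinearMap f).hasFDerivAt.hasFDerivWithinAt)
      hbij.injective.injOn g
    simpa [Set.range_eq_univ.mpr hbij.surjective, integral_smul] using h
  rw [hchange, inv_smul_smul₀ (abs_ne_zero.mpr hf)]

section VectorIntegral

variable {ι : Type*} [Fintype ι]

theorem integral_comp_complex_mulVec [DecidableEq ι] {F : Type*} [NormedAddCommGroup F]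
    [NormedSpace ℝ F] {M : Matrix ι ι ℂ} (hM : M.det ≠ 0) (g : (ι → ℂ) → F) :
    ∫ z, g (M *ᵥ z) = (‖M.det‖ ^ 2)⁻¹ • ∫ z, g z := by
  have hdet : LinearMap.det ((toLin' M).restrictScalars ℝ) = ‖M.det‖ ^ 2 := by
    rw [LinearMap.det_restrictScalars, Algebra.norm_complex_apply, normSq_eq_norm_sq,
      LinearMap.det_toLin']
  have hdet_ne : LinearMap.det ((toLin' M).restrictScalars ℝ) ≠ 0 := by
    rw [hdet]
    positivity
  simpa [hdet] using integral_comp_linearMap_eq_smul_integral volume hdet_ne g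

theorem integral_cexp_neg_star_dotProduct_self :
    ∫ z : ι → ℂ, cexp (-(star z ⬝ᵥ z)) = (Real.pi : ℂ) ^ Fintype.card ι := by
  have hprod (z : ι → ℂ) : cexp (-(star z ⬝ᵥ z)) = ∏ i, cexp (-(‖z i‖ : ℂ) ^ 2) := by
    simp [dotProduct, ← Complex.exp_sum, conj_mul']
  have hone : ∫ w : ℂ, cexp (-(‖w‖ : ℂ) ^ 2) = Real.pi := by
    simpa using GaussianFourier.integral_cexp_neg_mul_sq_norm (V := ℂ) (b := 1) (by simp)
  simp_rw [hprod]
  rw [integral_fintype_prod_volume_eq_pow fun w : ℂ => cexp (-(‖w‖ : ℂ) ^ 2), hone]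

open scoped MatrixOrder in
theorem integral_cexp_neg_star_dotProduct_mulVec [DecidableEq ι] {H : Matrix ι ι ℂ}
    (hH : H.PosDef) :
    ∫ z : ι → ℂ, cexp (-(star z ⬝ᵥ H *ᵥ z)) = (Real.pi : ℂ) ^ Fintype.card ι / H.det := by
  obtain ⟨R, hR, rfl⟩ :=
    CStarAlgebra.isStrictlyPositive_iff_eq_star_mul_self.mp hH.isStrictlyPositive
  have hform (z : ι → ℂ) : star z ⬝ᵥ (star R * R) *ᵥ z = star (R *ᵥ z) ⬝ᵥ R *ᵥ z := by
    rw [star_mulVec, ← dotProduct_mulVec, mulVec_mulVec, star_eq_conjTranspose]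
  have hdet : (star R * R).det = (‖R.det‖ : ℂ) ^ 2 := by
    rw [det_mul, star_eq_conjTranspose, det_conjTranspose, ← conj_mul', starRingEnd_apply]
  have hR_det : R.det ≠ 0 := ((isUnit_iff_isUnit_det R).mp hR).ne_zero
  simp_rw [hform]
  rw [integral_comp_complex_mulVec hR_det fun w => cexp (-(star w ⬝ᵥ w)),
    integral_cexp_neg_star_dotProduct_self, hdet, real_smul, div_eq_inv_mul]
  push_cast
  rfl

end VectorIntegral

section Vectorization

variable {m n : Type*} [Fintype m] [Fintype n]

theorem measurePreserving_vec_of {α : Type*} [MeasureSpace α] [SigmaFinite (volume : Measure α)] :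
    MeasurePreserving (fun S : m → n → α => vec (of S)) := by
  have hmeas : Measurable fun S : m → n → α => vec (of S) := by
    refine measurable_pi_lambda _ fun p => ?_
    exact (measurable_pi_apply p.1).comp (measurable_pi_apply p.2)
  refine ⟨hmeas, (Measure.pi_eq fun s hs => ?_).symm⟩
  have hpreimage : (fun S : m → n → α => vec (of S)) ⁻¹' Set.univ.pi s =
      Set.univ.pi fun i => Set.univ.pi fun j => s (j, i) := by
    ext S
    simp [flip, forall_comm (α := m)]
  rw [Measure.map_apply hmeas (.univ_pi hs), hpreimage, volume_pi_pi]
  simp_rw [volume_pi_pi]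
  rw [Fintype.prod_prod_type, Finset.prod_comm]

theorem trace_mul_conjTranspose_mul_mul_eq_star_vec_dotProduct {R : Type*}
    [NonUnitalCommSemiring R] [Star R] (A : Matrix n n R) (B : Matrix m m R) (X : Matrix m n R) :
    trace (A * Xᴴ * B * X) = star (vec X) ⬝ᵥ (Aᵀ ⊗ₖ B) *ᵥ vec X := by
  rw [kronecker_mulVec_vec, transpose_transpose, star_vec_dotProduct_vec]
  simp only [Matrix.mul_assoc]
  rw [trace_mul_comm A]
  simp only [Matrix.mul_assoc]

end Vectorization

theorem statement1_general {m n : Type*} [Fintype m] [Fintype n] [DecidableEq m] [DecidableEq n]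
    {A : Matrix n n ℂ} {B : Matrix m m ℂ} (hA : A.PosDef) (hB : B.PosDef) :
    ∫ S : m → n → ℂ, cexp (-trace (A * (of S)ᴴ * B * of S)) =
      (Real.pi : ℂ) ^ (Fintype.card m * Fintype.card n) / det (A ⊗ₖ B) := by
  have hdet : det (Aᵀ ⊗ₖ B) = det (A ⊗ₖ B) := by
    rw [det_kronecker, det_kronecker, det_transpose]
  have hvec : MeasurePreserving fun S : m → n → ℂ => vec (of S) := measurePreserving_vec_of
  have hcont : Continuous fun z : n × m → ℂ => cexp (-(star z ⬝ᵥ (Aᵀ ⊗ₖ B) *ᵥ z)) := by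
    fun_prop
  calc ∫ S : m → n → ℂ, cexp (-trace (A * (of S)ᴴ * B * of S))
    _ = ∫ S : m → n → ℂ, cexp (-(star (vec (of S)) ⬝ᵥ (Aᵀ ⊗ₖ B) *ᵥ vec (of S))) := by
      simp_rw [trace_mul_conjTranspose_mul_mul_eq_star_vec_dotProduct]
    _ = ∫ z : n × m → ℂ, cexp (-(star z ⬝ᵥ (Aᵀ ⊗ₖ B) *ᵥ z)) := by
      rw [← hvec.map_eq, integral_map hvec.aemeasurable hcont.aestronglyMeasurable]
    _ = (Real.pi : ℂ) ^ (Fintype.card m * Fintype.card n) / det (A ⊗ₖ B) := by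
      rw [integral_cexp_neg_star_dotProduct_mulVec (hA.transpose.kronecker hB), hdet,
        Fintype.card_prod, mul_comm]

/-- Gaussian matrix integral, zero-mean case. -/
theorem statement1 (m n : ℕ) (hm : 0 < m) (hn : 0 < n)
    (A3 : Matrix (Fin n) (Fin n) ℂ) (A4 : Matrix (Fin m) (Fin m) ℂ)
    (hA3 : A3.PosDef) (hA4 : A4.PosDef) :
    (1 / (Real.pi : ℂ) ^ (m * n)) *
      (∫ S : Fin m → Fin n → ℂ,
        Complex.exp (-Matrix.trace (A3 * (Matrix.of S)ᴴ * A4 * Matrix.of S))) =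
    1 / Matrix.det (A3 ⊗ₖ A4) := by
  rw [statement1_general hA3 hA4, Fintype.card_fin, Fintype.card_fin]
  field_simp
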